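/- Suppose A has a complex eigenvalue λ with λ^l = 1 for some positive integer l, the support of μ is not parallel to a proper subspace of ℚ^k invariant under A, and E[‖B_n‖_∞²] < ∞. Then there exist a constant γ > 0 and N ∈ ℕ such that for every integer p > N with gcd(det(A), p) = 1 and gcd(det(B), p) = 1, and every n ≥ 1, one has ‖P_n − U‖ ≥ (1/2)·exp(−γ·n/p²). Consequently, O(p²) steps are needed to reach the uniform distribution. -/

import Mathlib

open scoped BigOperators
open Matrix

noncomputable section

/-- Distribution of the un-reduced chain `X₀ = 0`, `X_{n+1} = A·X_n + B_n` on `ℤ^k`,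
where the `B_n` are i.i.d. with common distribution `μ`. -/
def chainDist {k : ℕ} (A : Matrix (Fin k) (Fin k) ℤ) (μ : (Fin k → ℤ) → ℝ) :
    ℕ → (Fin k → ℤ) → ℝ
  | 0 => fun x => if x = 0 then 1 else 0
  | n + 1 => fun x => ∑' y : Fin k → ℤ, chainDist A μ n y * μ (x - A.mulVec y)

/-- `P_n`, the distribution of `X_n = A·X_{n-1} + B_{n-1} (mod p)` on `(ℤ/pℤ)^k`. -/
def chainDistMod {k : ℕ} (A : Matrix (Fin k) (Fin k) ℤ) (μ : (Fin k → ℤ) → ℝ) (p : ℕ)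
    (n : ℕ) (x : Fin k → ZMod p) : ℝ :=
  ∑' y : {y : Fin k → ℤ // (fun i => ((y i : ZMod p))) = x}, chainDist A μ n y.val

/-- The uniform distribution `U` on `(ℤ/pℤ)^k`. -/
def unif (k p : ℕ) : ℝ := ((p : ℝ) ^ k)⁻¹

/-- The variation distance `‖P_n − U‖`. -/
def tvDist {k : ℕ} (A : Matrix (Fin k) (Fin k) ℤ) (μ : (Fin k → ℤ) → ℝ) (p : ℕ)
    (n : ℕ) : ℝ :=
  (1 / 2) * ∑' x : Fin k → ZMod p, |chainDistMod A μ p n x - unif k p|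

/-- `supp μ` is parallel to `v + W` for some proper subspace `W` of `ℚ^k` invariant under
`A`. -/
def ParallelInv {k : ℕ} (A : Matrix (Fin k) (Fin k) ℤ) (μ : (Fin k → ℤ) → ℝ) : Prop :=
  ∃ (W : Submodule ℚ (Fin k → ℚ)) (v : Fin k → ℚ), W ≠ ⊤ ∧
    (∀ w ∈ W, (A.map (Int.cast : ℤ → ℚ)).mulVec w ∈ W) ∧
    ∀ x : Fin k → ℤ, μ x ≠ 0 → (fun i => (x i : ℚ)) - v ∈ W

/-- `V = {h − k : h, k ∈ supp μ}`. -/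
def Vset {k : ℕ} (μ : (Fin k → ℤ) → ℝ) : Set (Fin k → ℤ) :=
  {x | ∃ h g : Fin k → ℤ, μ h ≠ 0 ∧ μ g ≠ 0 ∧ x = h - g}

/-- `d`, the degree of the minimal polynomial of `A` (over `ℚ`). -/
def minpolyDeg {k : ℕ} (A : Matrix (Fin k) (Fin k) ℤ) : ℕ :=
  (minpoly ℚ (A.map (Int.cast : ℤ → ℚ))).natDegree

/-- `V^{d−1} = {A^m x : x ∈ V, m = 0, …, d−1}`. -/
def VdSet {k : ℕ} (A : Matrix (Fin k) (Fin k) ℤ) (μ : (Fin k → ℤ) → ℝ) :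
    Set (Fin k → ℤ) :=
  {y | ∃ x ∈ Vset μ, ∃ m : ℕ, m < minpolyDeg A ∧ y = (A ^ m).mulVec x}

/-- The matrix `B = (y_1 … y_k)` with columns `y_1, …, y_k`. -/
def colMat {k : ℕ} (y : Fin k → (Fin k → ℤ)) : Matrix (Fin k) (Fin k) ℤ :=
  Matrix.of fun i j => y j i

/-!
Unrolling `X_{n+1} = A X_n + B_n` writes the Fourier transform of `P_n` at a frequency `v` as
`∏_{j < n} μ̂(v A^j)`, where `μ̂` is the transform of `μ`.  An eigenvalue `λ` of `A` with
`λ^l = 1` makes `A^l - 1` singular, so some nonzero integer row vector `v` satisfies `v A^l = v`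
and its orbit `v A^j` stays bounded.  By `cos t ≥ 1 - t² / 2` and the second moment of `μ`, each
of the `n` factors is then at least `1 - C / p²` in modulus with `C` independent of `j` and `p`.
As soon as `p` exceeds the entries of `v`, the corresponding character mod `p` is nontrivial,
hence orthogonal to `U`, and the modulus of the transform of `P_n` at `v` bounds `2 ‖P_n - U‖`
from below.
-/

section CharSum

variable {G H : Type*}

/-- The Fourier transform `∑ x, f x χ(x)` of a real function on an additive monoid at a unitary
character; `tsum` makes it `0` when `f` is not summable. -/
def charSum [AddMonoid G] (f : G → ℝ) (χ : AddChar G Circle) : ℂ :=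
  ∑' x, (f x : ℂ) * χ x

lemma summable_ofReal_mul_circle {f : G → ℝ} (hf : Summable f) (z : G → Circle) :
    Summable fun x => (f x : ℂ) * z x :=
  .of_norm <| hf.norm.congr fun x => by
    rw [norm_mul, Circle.norm_coe, mul_one, Complex.norm_real]

lemma charSum_compAddMonoidHom [AddMonoid G] [AddMonoid H] {f : G → ℝ} (hf : Summable f)
    (φ : G →+ H) (χ : AddChar H Circle) :
    charSum f (χ.compAddMonoidHom φ) = charSum (fun y => ∑' x : {x // φ x = y}, f x) χ := by
  have hsum := (summable_ofReal_mul_circle hf (χ.compAddMonoidHom φ)).hasSum.tsum_fiberwise φ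
  refine hsum.tsum_eq.symm.trans (tsum_congr fun y => ?_)
  rw [Complex.ofReal_tsum, ← tsum_mul_right]
  exact tsum_congr fun x => by rw [AddChar.compAddMonoidHom_apply, x.2]

/-- The substitution `(x, y) ↦ (y, x - φ y)`, under which a sum over `(x, y)` of
`c y * μ (x - φ y)` becomes one over a product. -/
def subShear [AddGroup H] (φ : G → H) : H × G ≃ G × H where
  toFun q := (q.2, q.1 - φ q.2)
  invFun q := (q.2 + φ q.1, q.1)
  left_inv q := by simp
  right_inv q := by simp

lemma summable_mul_comp_sub [AddGroup H] {c : G → ℝ} {μ : H → ℝ} (hc : Summable c)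
    (hμ : Summable μ) (φ : G → H) : Summable fun q : H × G => c q.2 * μ (q.1 - φ q.2) :=
  (subShear φ).summable_iff.2 (summable_mul_of_summable_norm hc.norm hμ.norm)

lemma charSum_tsum_mul_comp_sub [AddMonoid G] [AddGroup H] {c : G → ℝ} {μ : H → ℝ}
    (hc : Summable c) (hμ : Summable μ) (φ : G →+ H) (χ : AddChar H Circle) :
    charSum (fun x => ∑' y, c y * μ (x - φ y)) χ =
      charSum c (χ.compAddMonoidHom φ) * charSum μ χ := by
  have hterm (x : H) (y : G) : ((c y * μ (x - φ y) : ℝ) : ℂ) * χ x =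
      ((c y : ℂ) * χ (φ y)) * ((μ (x - φ y) : ℂ) * χ (x - φ y)) := by
    have hχ : χ x = χ (x - φ y) * χ (φ y) := by rw [← χ.map_add_eq_mul, sub_add_cancel]
    rw [hχ]
    push_cast
    ring
  calc
    charSum (fun x => ∑' y, c y * μ (x - φ y)) χ
        = ∑' x, ∑' y, ((c y * μ (x - φ y) : ℝ) : ℂ) * χ x :=
      tsum_congr fun x => by rw [Complex.ofReal_tsum, tsum_mul_right]
    _ = ∑' q : H × G, ((c q.2 * μ (q.1 - φ q.2) : ℝ) : ℂ) * χ q.1 :=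
      (summable_ofReal_mul_circle (summable_mul_comp_sub hc hμ φ) fun q => χ q.1).tsum_prod.symm
    _ = ∑' q : G × H, ((c q.1 : ℂ) * χ (φ q.1)) * ((μ q.2 : ℂ) * χ q.2) := by
      rw [← (subShear φ).tsum_eq]
      exact tsum_congr fun q => hterm q.1 q.2
    _ = charSum c (χ.compAddMonoidHom φ) * charSum μ χ :=
      (tsum_mul_tsum_of_summable_norm
        (summable_ofReal_mul_circle hc (χ.compAddMonoidHom φ)).norm
        (summable_ofReal_mul_circle hμ χ).norm).symm

end CharSum

section FiniteGroup

variable {G : Type*} [AddGroup G] [Fintype G]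

lemma sum_coe_addChar_eq_zero {χ : AddChar G Circle} (hχ : χ ≠ 1) : ∑ x, (χ x : ℂ) = 0 :=
  AddChar.sum_eq_zero_iff_ne_zero (ψ := Circle.coeHom.compAddChar χ).2 fun h =>
    hχ <| AddChar.ext _ _ fun x => Circle.coe_injective (DFunLike.congr_fun h x)

lemma norm_charSum_le_sum_abs_sub {χ : AddChar G Circle} (hχ : χ ≠ 1) (q : G → ℝ) (u : ℝ) :
    ‖charSum q χ‖ ≤ ∑ x, |q x - u| := by
  have hshift : charSum q χ = ∑ x, ((q x - u : ℝ) : ℂ) * χ x := by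
    simp only [charSum, tsum_fintype, Complex.ofReal_sub, sub_mul, Finset.sum_sub_distrib,
      ← Finset.mul_sum, sum_coe_addChar_eq_zero hχ, mul_zero, sub_zero]
  rw [hshift]
  exact (norm_sum_le _ _).trans_eq (Finset.sum_congr rfl fun x _ => by
    rw [norm_mul, Circle.norm_coe, mul_one, Complex.norm_real, Real.norm_eq_abs])

end FiniteGroup

lemma one_sub_secondMoment_half_le_norm_tsum_exp {Ω : Type*} {μ g : Ω → ℝ} (hμ0 : ∀ x, 0 ≤ μ x)
    (hμ1 : HasSum μ 1) (hg : Summable fun x => μ x * g x ^ 2) :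
    1 - (∑' x, μ x * g x ^ 2) / 2 ≤ ‖∑' x, (μ x : ℂ) * Circle.exp (g x)‖ := by
  have hsum := (summable_ofReal_mul_circle hμ1.summable fun x => Circle.exp (g x)).hasSum
  refine (hasSum_le (fun x => ?_) (hμ1.sub (hg.hasSum.div_const 2))
    (Complex.hasSum_re hsum)).trans (Complex.re_le_norm _)
  calc
    μ x - μ x * g x ^ 2 / 2 = μ x * (1 - g x ^ 2 / 2) := by ring
    _ ≤ μ x * Real.cos (g x) :=
      mul_le_mul_of_nonneg_left Real.one_sub_sq_div_two_le_cos (hμ0 x)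
    _ = ((μ x : ℂ) * Circle.exp (g x)).re := by
      rw [Complex.re_ofReal_mul, Circle.coe_exp, Complex.exp_ofReal_mul_I_re]

section LatticeChar

variable {ι : Type*}

/-- Coordinatewise reduction `ℤ^ι → (ℤ/pℤ)^ι`. -/
def reduceMod (ι : Type*) (p : ℕ) : (ι → ℤ) →+ (ι → ZMod p) :=
  (Int.castAddHom (ZMod p)).compLeft ι

variable [Fintype ι]

/-- The character `x ↦ exp(2πi (a · x) / p)` of `(ℤ/pℤ)^ι`. -/
def dotChar {p : ℕ} [NeZero p] (a : ι → ZMod p) : AddChar (ι → ZMod p) Circle :=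
  ZMod.toCircle.compAddMonoidHom (dotProductBilin (ZMod p) (ZMod p) a).toAddMonoidHom

/-- The character `x ↦ exp(2πi (a · x) / p)` of `ℤ^ι`, obtained by pulling back `dotChar` along
reduction mod `p`. -/
def latticeChar (p : ℕ) [NeZero p] (a : ι → ℤ) : AddChar (ι → ℤ) Circle :=
  (dotChar (reduceMod ι p a)).compAddMonoidHom (reduceMod ι p)

lemma reduceMod_ne_zero {p : ℕ} {a : ι → ℤ} (ha : a ≠ 0) (hap : ‖a‖ < p) :
    reduceMod ι p a ≠ 0 := by
  obtain ⟨i, hi⟩ := Function.ne_iff.1 ha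
  intro h
  have hdvd : (p : ℤ) ∣ a i := (ZMod.intCast_zmod_eq_zero_iff_dvd _ _).1 (congrFun h i)
  have hlt : |a i| < p := by
    have := (norm_le_pi_norm a i).trans_lt hap
    rw [Int.norm_eq_abs] at this
    exact_mod_cast this
  exact hi (Int.eq_zero_of_abs_lt_dvd hdvd hlt)

variable {p : ℕ} [NeZero p]

lemma dotChar_ne_one {a : ι → ZMod p} (ha : a ≠ 0) : dotChar a ≠ 1 := by
  classical
  obtain ⟨i, hi⟩ := Function.ne_iff.1 ha
  refine (dotChar a).ne_one_iff.2 ⟨Pi.single i 1, fun h => hi ?_⟩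
  have hval : dotChar a (Pi.single i 1) = ZMod.toCircle (a i) := by
    simp [dotChar, dotProductBilin]
  exact ZMod.injective_toCircle <| (hval.symm.trans h).trans ZMod.toCircle.map_zero_eq_one.symm

lemma latticeChar_eq_toCircle (a x : ι → ℤ) :
    latticeChar p a x = ZMod.toCircle ((a ⬝ᵥ x : ℤ) : ZMod p) := by
  simp [latticeChar, dotChar, dotProductBilin, reduceMod, dotProduct]

lemma latticeChar_apply (a x : ι → ℤ) :
    latticeChar p a x = Circle.exp (2 * Real.pi / p * (a ⬝ᵥ x : ℤ)) := by
  rw [latticeChar_eq_toCircle]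
  refine Circle.coe_injective ?_
  rw [ZMod.toCircle_intCast, Circle.coe_exp]
  push_cast
  ring_nf

lemma latticeChar_comp_mulVecLin (A : Matrix ι ι ℤ) (a : ι → ℤ) :
    (latticeChar p a).compAddMonoidHom A.mulVecLin.toAddMonoidHom = latticeChar p (a ᵥ* A) := by
  ext x
  simp [latticeChar_eq_toCircle, dotProduct_mulVec]

lemma abs_intCast_dotProduct_le (a x : ι → ℤ) :
    |((a ⬝ᵥ x : ℤ) : ℝ)| ≤ Fintype.card ι * ‖a‖ * ‖x‖ := by
  calc
    |((a ⬝ᵥ x : ℤ) : ℝ)| = ‖∑ i, a i * x i‖ := (Int.norm_eq_abs _).symm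
    _ ≤ ∑ i, ‖a i * x i‖ := norm_sum_le _ _
    _ ≤ ∑ _i : ι, ‖a‖ * ‖x‖ := Finset.sum_le_sum fun i _ => (norm_mul_le _ _).trans <|
        mul_le_mul (norm_le_pi_norm a i) (norm_le_pi_norm x i) (norm_nonneg _) (norm_nonneg _)
    _ = Fintype.card ι * ‖a‖ * ‖x‖ := by simp [mul_assoc]

lemma one_sub_div_sq_le_norm_charSum_latticeChar {μ : (ι → ℤ) → ℝ} (hμ0 : ∀ x, 0 ≤ μ x)
    (hμ1 : HasSum μ 1) (hμ2 : Summable fun x => μ x * ‖x‖ ^ 2) (a : ι → ℤ) :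
    1 - 2 * (Real.pi * Fintype.card ι * ‖a‖) ^ 2 * (∑' x, μ x * ‖x‖ ^ 2) / (p : ℝ) ^ 2 ≤
      ‖charSum μ (latticeChar p a)‖ := by
  set K : ℝ := 2 * Real.pi / p * (Fintype.card ι * ‖a‖) with hK
  set g : (ι → ℤ) → ℝ := fun x => 2 * Real.pi / p * (a ⬝ᵥ x : ℤ) with hg
  have hgsq (x : ι → ℤ) : μ x * g x ^ 2 ≤ K ^ 2 * (μ x * ‖x‖ ^ 2) := by
    have habs : |g x| ≤ K * ‖x‖ := by
      rw [hg, hK, abs_mul, abs_of_nonneg (by positivity), mul_assoc]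
      gcongr
      exact abs_intCast_dotProduct_le a x
    calc
      μ x * g x ^ 2 ≤ μ x * (K * ‖x‖) ^ 2 :=
        mul_le_mul_of_nonneg_left (sq_le_sq' (abs_le.1 habs).1 (abs_le.1 habs).2) (hμ0 x)
      _ = K ^ 2 * (μ x * ‖x‖ ^ 2) := by ring
  have hgsum : Summable fun x => μ x * g x ^ 2 :=
    .of_nonneg_of_le (fun x => mul_nonneg (hμ0 x) (sq_nonneg _)) hgsq (hμ2.mul_left _)
  have hmoment : ∑' x, μ x * g x ^ 2 ≤ K ^ 2 * ∑' x, μ x * ‖x‖ ^ 2 :=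
    (hgsum.tsum_le_tsum hgsq (hμ2.mul_left _)).trans_eq tsum_mul_left
  calc
    _ = 1 - K ^ 2 * (∑' x, μ x * ‖x‖ ^ 2) / 2 := by rw [hK]; ring
    _ ≤ 1 - (∑' x, μ x * g x ^ 2) / 2 := by gcongr
    _ ≤ ‖∑' x, (μ x : ℂ) * Circle.exp (g x)‖ :=
      one_sub_secondMoment_half_le_norm_tsum_exp hμ0 hμ1 hgsum
    _ = ‖charSum μ (latticeChar p a)‖ := by simp only [charSum, latticeChar_apply, hg]

end LatticeChar

section BoundedOrbit

variable {n : Type*} [Fintype n] [DecidableEq n]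

lemma det_pow_sub_one_eq_zero_of_isRoot_charpoly {S : Type*} [CommRing S] {C : Matrix n n S}
    {lam : S} {l : ℕ} (hroot : C.charpoly.IsRoot lam) (hlam : lam ^ l = 1) :
    (C ^ l - 1).det = 0 := by
  have hdvd : scalar n lam - C ∣ scalar n lam ^ l - C ^ l :=
    (scalar_commute lam (Commute.all lam) C).sub_dvd_pow_sub_pow l
  have hdet := map_dvd detMonoidHom hdvd
  rw [← map_pow, hlam, map_one, coe_detMonoidHom, ← eval_charpoly, hroot.eq_zero,
    zero_dvd_iff] at hdet
  rw [← neg_sub, det_neg, hdet, mul_zero]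

lemma exists_ne_zero_vecMul_pow_eq_self {R S : Type*} [CommRing R] [IsDomain R] [CommRing S]
    {f : R →+* S} (hf : Function.Injective f) {A : Matrix n n R} {lam : S} {l : ℕ}
    (hroot : (A.map f).charpoly.IsRoot lam) (hlam : lam ^ l = 1) :
    ∃ v : n → R, v ≠ 0 ∧ v ᵥ* A ^ l = v := by
  have hdet : (A ^ l - 1).det = 0 := by
    refine (map_eq_zero_iff f hf).1 ?_
    rw [f.map_det, map_sub, map_pow, map_one, f.mapMatrix_apply]
    exact det_pow_sub_one_eq_zero_of_isRoot_charpoly hroot hlam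
  obtain ⟨v, hv0, hv⟩ := exists_vecMul_eq_zero_iff.2 hdet
  exact ⟨v, hv0, sub_eq_zero.1 <| by rwa [vecMul_sub, vecMul_one] at hv⟩

lemma finite_range_vecMul_pow {R : Type*} [Semiring R] {A : Matrix n n R} {v : n → R} {l : ℕ}
    (hl : 0 < l) (hv : v ᵥ* A ^ l = v) : (Set.range fun j => v ᵥ* A ^ j).Finite := by
  have hper : Function.Periodic (fun j => v ᵥ* A ^ j) l := fun j => by
    simp only [add_comm j l, pow_add, ← vecMul_vecMul, hv]
  refine ((Set.finite_lt_nat l).image fun j => v ᵥ* A ^ j).subset ?_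
  rintro _ ⟨j, rfl⟩
  exact ⟨j % l, Nat.mod_lt j hl, hper.map_mod_nat j⟩

end BoundedOrbit

section Chain

variable {k : ℕ} {A : Matrix (Fin k) (Fin k) ℤ} {μ : (Fin k → ℤ) → ℝ}

lemma summable_chainDist (hμ : Summable μ) : ∀ n, Summable (chainDist A μ n)
  | 0 => (hasSum_ite_eq 0 1).summable
  | n + 1 => (summable_mul_comp_sub (summable_chainDist hμ n) hμ A.mulVec).prod

lemma charSum_chainDist_latticeChar (hμ : Summable μ) (p : ℕ) [NeZero p] (n : ℕ)
    (a : Fin k → ℤ) :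
    charSum (chainDist A μ n) (latticeChar p a) =
      ∏ j ∈ Finset.range n, charSum μ (latticeChar p (a ᵥ* A ^ j)) := by
  induction n generalizing a with
  | zero =>
    have hsupp (x : Fin k → ℤ) (hx : x ≠ 0) : (chainDist A μ 0 x : ℂ) * latticeChar p a x = 0 := by
      simp [chainDist, hx]
    rw [charSum, tsum_eq_single 0 hsupp]
    simp [chainDist]
  | succ n ih =>
    calc
      charSum (chainDist A μ (n + 1)) (latticeChar p a)
          = charSum (chainDist A μ n) (latticeChar p (a ᵥ* A)) * charSum μ (latticeChar p a) := by
        rw [← latticeChar_comp_mulVecLin]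
        exact charSum_tsum_mul_comp_sub (summable_chainDist hμ n) hμ A.mulVecLin.toAddMonoidHom _
      _ = ∏ j ∈ Finset.range (n + 1), charSum μ (latticeChar p (a ᵥ* A ^ j)) := by
        simp only [ih, vecMul_vecMul, ← pow_succ', Finset.prod_range_succ', pow_zero, vecMul_one]

lemma half_norm_charSum_latticeChar_le_tvDist (hμ : Summable μ) {p : ℕ} [NeZero p]
    {a : Fin k → ℤ} (ha : reduceMod (Fin k) p a ≠ 0) (n : ℕ) :
    (1 / 2) * ‖charSum (chainDist A μ n) (latticeChar p a)‖ ≤ tvDist A μ p n := by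
  rw [latticeChar, charSum_compAddMonoidHom (summable_chainDist hμ n), tvDist, tsum_fintype]
  exact mul_le_mul_of_nonneg_left (norm_charSum_le_sum_abs_sub (dotChar_ne_one ha) _ _)
    one_half_pos.le

lemma exists_one_sub_div_sq_le_norm_charSum (hμ0 : ∀ x, 0 ≤ μ x) (hμ1 : HasSum μ 1)
    (hμ2 : Summable fun x => μ x * ‖x‖ ^ 2) {s : Set (Fin k → ℤ)} (hs : s.Finite) :
    ∃ C : ℝ, 0 < C ∧ ∀ a ∈ s, ∀ (p : ℕ) [NeZero p],
      1 - C / (p : ℝ) ^ 2 ≤ ‖charSum μ (latticeChar p a)‖ := by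
  obtain ⟨M, hM⟩ := hs.isBounded.exists_norm_le
  have hmoment : 0 ≤ ∑' x, μ x * ‖x‖ ^ 2 :=
    tsum_nonneg fun x => mul_nonneg (hμ0 x) (sq_nonneg _)
  refine ⟨2 * (Real.pi * k * M) ^ 2 * (∑' x, μ x * ‖x‖ ^ 2) + 1, by positivity,
    fun a ha p _ => ?_⟩
  refine le_trans ?_ (one_sub_div_sq_le_norm_charSum_latticeChar hμ0 hμ1 hμ2 a)
  rw [Fintype.card_fin]
  have haM := hM a ha
  gcongr
  refine le_add_of_le_of_nonneg ?_ zero_le_one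
  gcongr

lemma exp_neg_two_mul_le_one_sub {x : ℝ} (hx0 : 0 ≤ x) (hx : x ≤ 1 / 2) :
    Real.exp (-(2 * x)) ≤ 1 - x := by
  have hpos : 0 < 1 - x := by linarith
  rw [← Real.le_log_iff_exp_le hpos]
  calc
    -(2 * x) ≤ 1 - (1 - x)⁻¹ := by
      rw [le_sub_comm, inv_le_iff_one_le_mul₀ hpos]
      nlinarith
    _ ≤ Real.log (1 - x) := Real.one_sub_inv_le_log_of_pos hpos

lemma half_exp_le_tvDist (hμ : Summable μ) {p : ℕ} [NeZero p] {v : Fin k → ℤ}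
    (hv : reduceMod (Fin k) p v ≠ 0) {x : ℝ} (hx0 : 0 ≤ x) (hx : x ≤ 1 / 2)
    (hfactor : ∀ j, 1 - x ≤ ‖charSum μ (latticeChar p (v ᵥ* A ^ j))‖) (n : ℕ) :
    (1 / 2) * Real.exp (-(2 * x) * n) ≤ tvDist A μ p n := by
  refine le_trans ?_ (half_norm_charSum_latticeChar_le_tvDist hμ hv n)
  gcongr
  calc
    Real.exp (-(2 * x) * n) = ∏ _j ∈ Finset.range n, Real.exp (-(2 * x)) := by
      rw [Finset.prod_const, Finset.card_range, mul_comm, Real.exp_nat_mul]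
    _ ≤ ∏ j ∈ Finset.range n, ‖charSum μ (latticeChar p (v ᵥ* A ^ j))‖ :=
      Finset.prod_le_prod (fun _ _ => (Real.exp_pos _).le) fun j _ =>
        (exp_neg_two_mul_le_one_sub hx0 hx).trans (hfactor j)
    _ = ‖charSum (chainDist A μ n) (latticeChar p v)‖ := by
      rw [charSum_chainDist_latticeChar hμ, norm_prod]

end Chain

lemma natCast_sup_natAbs_eq_norm {ι : Type*} [Fintype ι] (h : ι → ℤ) :
    ((Finset.univ.sup fun i => (h i).natAbs : ℕ) : ℝ) = ‖h‖ := by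
  have hnn : ((Finset.univ.sup fun i => (h i).natAbs : ℕ) : NNReal) = ‖h‖₊ := by
    simp only [Nat.cast_finsetSup, NNReal.natCast_natAbs, Pi.nnnorm_def]
  exact congrArg NNReal.toReal hnn

theorem lower_bound_p_sq_general {k : ℕ} (A : Matrix (Fin k) (Fin k) ℤ)
    (hEig : ∃ (lam : ℂ) (l : ℕ), 0 < l ∧
      (A.map (Int.cast : ℤ → ℂ)).charpoly.IsRoot lam ∧ lam ^ l = 1)
    (μ : (Fin k → ℤ) → ℝ) (hμ0 : ∀ x, 0 ≤ μ x) (hμ1 : HasSum μ 1)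
    (hL2 : Summable (fun h : Fin k → ℤ =>
      μ h * ((Finset.univ.sup fun i => (h i).natAbs : ℕ) : ℝ) ^ 2)) :
    ∃ (γ : ℝ) (N : ℕ), 0 < γ ∧ ∀ p : ℕ, N < p → ∀ n : ℕ,
      (1 / 2) * Real.exp (-(γ * n) / (p : ℝ) ^ 2) ≤ tvDist A μ p n := by
  obtain ⟨lam, l, hl, hroot, hlam⟩ := hEig
  obtain ⟨v, hv0, hv⟩ := exists_ne_zero_vecMul_pow_eq_self (f := Int.castRingHom ℂ)
    Int.cast_injective hroot hlam
  obtain ⟨C, hC, hfactor⟩ := exists_one_sub_div_sq_le_norm_charSum hμ0 hμ1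
    (by simpa only [natCast_sup_natAbs_eq_norm] using hL2) (finite_range_vecMul_pow hl hv)
  refine ⟨2 * C, ⌈max ‖v‖ (2 * C)⌉₊, by positivity, fun p hp n => ?_⟩
  obtain ⟨hvp, hCp⟩ := max_lt_iff.1 ((Nat.le_ceil _).trans_lt (Nat.cast_lt.2 hp))
  have : NeZero p := ⟨Nat.ne_zero_of_lt hp⟩
  have hp1 : (1 : ℝ) ≤ p := by exact_mod_cast NeZero.one_le
  have hx : C / (p : ℝ) ^ 2 ≤ 1 / 2 := by
    rw [div_le_iff₀ (by positivity)]
    nlinarith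
  convert half_exp_le_tvDist hμ1.summable (reduceMod_ne_zero hv0 hvp) (by positivity) hx
    (fun j => hfactor _ ⟨j, rfl⟩ p) n using 3
  ring

/-- **Theorem 3.11**: if `A` has a complex eigenvalue `λ` with `λ^l = 1` for some positive
integer `l`, the support of `μ` is not parallel to a proper subspace of `ℚ^k` invariant
under `A`, and `Σ_h μ(h) ‖h‖_∞² < ∞`, then there are `γ > 0` and `N ∈ ℕ` such that for
all `p > N` with `gcd(det A, p) = gcd(det B, p) = 1` and all `n ≥ 1`,
`‖P_n − U‖ ≥ (1/2) exp(−γ n / p²)`.  (Hence `O(p²)` steps are needed.) -/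
theorem lower_bound_p_sq (k : ℕ) (hk : 1 ≤ k)
    (A : Matrix (Fin k) (Fin k) ℤ) (hA : A.det ≠ 0)
    (hEig : ∃ (lam : ℂ) (l : ℕ), 0 < l ∧
      (A.map (Int.cast : ℤ → ℂ)).charpoly.IsRoot lam ∧ lam ^ l = 1)
    (μ : (Fin k → ℤ) → ℝ) (hμ0 : ∀ x, 0 ≤ μ x) (hμ1 : HasSum μ 1)
    (hL2 : Summable (fun h : Fin k → ℤ =>
      μ h * ((Finset.univ.sup fun i => (h i).natAbs : ℕ) : ℝ) ^ 2))
    (hpar : ¬ ParallelInv A μ)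
    (y : Fin k → (Fin k → ℤ)) (hy : ∀ j, y j ∈ VdSet A μ)
    (hybasis : (colMat y).det ≠ 0) :
    ∃ (γ : ℝ) (N : ℕ), 0 < γ ∧
      ∀ p : ℕ, N < p → Int.gcd A.det p = 1 → Int.gcd (colMat y).det p = 1 →
        ∀ n : ℕ, 1 ≤ n →
          (1 / 2) * Real.exp (-(γ * n) / (p : ℝ) ^ 2) ≤ tvDist A μ p n := by
  obtain ⟨γ, N, hγ, h⟩ := lower_bound_p_sq_general A hEig μ hμ0 hμ1 hL2
  exact ⟨γ, N, hγ, fun p hp _ _ n _ => h p hp n⟩
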